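/- For all K < 0, N ∈ (1,∞) and D ∈ (0,∞): λ[h_{K,N,D}] ≥ (1/4)·max(|K|·(N−1), N²/D²)·(sinh(√(−K/(N−1))·D/2)/sinh(√(−K/(N−1))·D))^{N−1}. -/

import Mathlib

open MeasureTheory Filter

/-- The function `s_κ` from the paper. -/
noncomputable def sKappa (κ θ : ℝ) : ℝ :=
  if 0 < κ then Real.sin (Real.sqrt κ * θ) / Real.sqrt κ
  else if κ < 0 then Real.sinh (Real.sqrt (-κ) * θ) / Real.sqrt (-κ)
  else θ

/-- The support of the measure `h · 𝓛¹`. -/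
noncomputable def measSupport (h : ℝ → ℝ) : Set ℝ :=
  {x : ℝ | ∀ ε > 0,
    0 < (MeasureTheory.volume.withDensity (fun y => ENNReal.ofReal (h y))) (Metric.ball x ε)}

/-- A one-dimensional `MCP(K,N)` density. -/
def IsMCPDensity (K N : ℝ) (h : ℝ → ℝ) : Prop :=
  (∀ x, 0 ≤ h x) ∧ MeasureTheory.LocallyIntegrable h MeasureTheory.volume ∧
  ∀ x₀ ∈ measSupport h, ∀ x₁ ∈ measSupport h,
    (0 < K → x₀ ≠ x₁ → |x₁ - x₀| < Real.pi / Real.sqrt (K / (N - 1))) ∧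
    ∀ t ∈ Set.Icc (0:ℝ) 1,
      (sKappa (K / (N - 1)) ((1 - t) * |x₁ - x₀|) / sKappa (K / (N - 1)) |x₁ - x₀|) ^ (N - 1)
          * h x₀
        ≤ h (t * x₁ + (1 - t) * x₀)

/-- The model density `h_{K,N,D}`. -/
noncomputable def modelDensity (K N D : ℝ) (x : ℝ) : ℝ :=
  if x ∈ Set.Icc 0 (D / 2) then sKappa (K / (N - 1)) (D - x) ^ (N - 1)
  else if x ∈ Set.Icc (D / 2) D then sKappa (K / (N - 1)) x ^ (N - 1)
  else 0

/-- Locally Lipschitz functions on a subset `I` of the reals. -/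
def LocLipschitzOn (f : ℝ → ℝ) (I : Set ℝ) : Prop :=
  ∀ x ∈ I, ∃ ε > 0, ∃ C : NNReal, LipschitzOnWith C f (I ∩ Metric.ball x ε)

/-- The local Lipschitz slope `|∇f|(x)` relative to `I`. -/
noncomputable def slopeOn (f : ℝ → ℝ) (I : Set ℝ) (x : ℝ) : ℝ :=
  Filter.limsup (fun y => |f y - f x| / |y - x|) (nhdsWithin x (I \ {x}))

/-- The Poincaré constant `λ[h, I]` of the density `h` on `I`. -/
noncomputable def poincareConst (h : ℝ → ℝ) (I : Set ℝ) : ℝ :=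
  sInf { r : ℝ | ∃ f : ℝ → ℝ, LocLipschitzOn f I ∧
    (∫ x in I, f x * h x) = 0 ∧
    (0 < ∫ x in I, (f x) ^ 2 * h x) ∧
    MeasureTheory.IntegrableOn (fun x => (f x) ^ 2 * h x) I ∧
    r = (∫ x in I, (slopeOn f I x) ^ 2 * h x) / (∫ x in I, (f x) ^ 2 * h x) }

/-!
By Cauchy–Schwarz, `|f x - f c| ^ 2 ≤ (∫ 1 / w) * ∫ f' ^ 2 * w`, the first integral being taken
between `c` and `x`. For a density `w` on `[0, D]` symmetric about the midpoint `c = D / 2`,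
integrating this against `w` bounds the Poincaré constant below by `1 / (2 * (∫ w) * (∫ 1 / w))`,
with both integrals over `[D / 2, D]`.

Multiplied by `w (D / 2) / w D`, the product `(∫ w) * (∫ 1 / w)` decreases when the logarithmic
derivative of `w` increases. The logarithmic derivative of `sinh (a * x)` is at least `1 / x` and
at least `a`, so for `w x = sinh (a * x) ^ n` the product is controlled by the explicit ones for
`x ^ n` and `exp (n * a * x)`, and each comparison yields one term of the maximum.
-/

open Set

section WeightedCauchySchwarz

variable {α : Type*} [MeasurableSpace α] {μ : Measure α} {f w : α → ℝ}

lemma sq_integral_le_integral_inv_mul_integral_sq_mul (hw : ∀ᵐ x ∂μ, 0 < w x)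
    (hf : Integrable f μ) (hinv : Integrable (fun x ↦ (w x)⁻¹) μ)
    (hf2 : Integrable (fun x ↦ f x ^ 2 * w x) μ) :
    (∫ x, f x ∂μ) ^ 2 ≤ (∫ x, (w x)⁻¹ ∂μ) * ∫ x, f x ^ 2 * w x ∂μ := by
  have hlin (s : ℝ) : Integrable (fun x ↦ -2 * f x * s) μ := (hf.const_mul (-2)).mul_const s
  have quadratic_nonneg (s : ℝ) : 0 ≤ (∫ x, (w x)⁻¹ ∂μ) * (s * s) + (-2 * ∫ x, f x ∂μ) * s +
      ∫ x, f x ^ 2 * w x ∂μ := by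
    calc 0 ≤ ∫ x, (s - f x * w x) ^ 2 * (w x)⁻¹ ∂μ :=
          integral_nonneg_of_ae (hw.mono fun x hx ↦ mul_nonneg (sq_nonneg _) (inv_pos.2 hx).le)
      _ = ∫ x, ((w x)⁻¹ * (s * s) + (-2 * f x) * s + f x ^ 2 * w x) ∂μ :=
          integral_congr_ae (hw.mono fun x hx ↦ by
            have := hx.ne'
            field_simp
            ring)
      _ = _ := by
          rw [integral_add (by exact (hinv.mul_const _).add (hlin s)) hf2,
            integral_add (hinv.mul_const _) (hlin s), integral_mul_const, integral_mul_const,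
            integral_const_mul]
  have := discrim_le_zero quadratic_nonneg
  rw [discrim] at this
  linarith

lemma integral_sq_mul_le_integral_sub_sq_mul (hw : ∀ᵐ x ∂μ, 0 ≤ w x) (hw' : Integrable w μ)
    (hfw : Integrable (fun x ↦ f x * w x) μ) (hf2 : Integrable (fun x ↦ f x ^ 2 * w x) μ)
    (hmean : ∫ x, f x * w x ∂μ = 0) (b : ℝ) :
    ∫ x, f x ^ 2 * w x ∂μ ≤ ∫ x, (f x - b) ^ 2 * w x ∂μ := by
  have expand : ∫ x, (f x - b) ^ 2 * w x ∂μ = ∫ x, f x ^ 2 * w x ∂μ + b ^ 2 * ∫ x, w x ∂μ :=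
    calc ∫ x, (f x - b) ^ 2 * w x ∂μ
        = ∫ x, (f x ^ 2 * w x - 2 * b * (f x * w x) + b ^ 2 * w x) ∂μ := by
          congr with x
          ring
      _ = _ := by
          rw [integral_add (by exact hf2.sub (hfw.const_mul _)) (hw'.const_mul _),
            integral_sub hf2 (hfw.const_mul _), integral_const_mul, integral_const_mul, hmean]
          ring
  rw [expand]
  exact le_add_of_nonneg_right (mul_nonneg (sq_nonneg b) (integral_nonneg_of_ae hw))

end WeightedCauchySchwarz

section WeightedPoincare

variable {w f : ℝ → ℝ} {p q : ℝ}

lemma intervalIntegrable_inv_of_pos (hpq : p ≤ q) (hw : ContinuousOn w (Icc p q))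
    (hw0 : ∀ x ∈ Icc p q, 0 < w x) : IntervalIntegrable (fun x ↦ (w x)⁻¹) volume p q :=
  (hw.inv₀ fun x hx ↦ (hw0 x hx).ne').intervalIntegrable_of_Icc hpq

lemma sq_sub_le_integral_inv_mul_integral_deriv_sq_mul (hpq : p ≤ q)
    (hw : ContinuousOn w (Icc p q)) (hw0 : ∀ x ∈ Icc p q, 0 < w x)
    (hf : AbsolutelyContinuousOnInterval f p q)
    (hE : IntervalIntegrable (fun x ↦ deriv f x ^ 2 * w x) volume p q) :
    (f q - f p) ^ 2 ≤ (∫ x in p..q, (w x)⁻¹) * ∫ x in p..q, deriv f x ^ 2 * w x := by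
  have hinv := intervalIntegrable_inv_of_pos hpq hw hw0
  have hderiv := hf.intervalIntegrable_deriv
  rw [intervalIntegrable_iff_integrableOn_Ioc_of_le hpq] at hinv hE hderiv
  rw [← hf.integral_deriv_eq_sub]
  simp only [intervalIntegral.integral_of_le hpq]
  exact sq_integral_le_integral_inv_mul_integral_sq_mul
    ((ae_restrict_mem measurableSet_Ioc).mono fun x hx ↦ hw0 x (Ioc_subset_Icc_self hx))
    hderiv hinv hE

lemma integral_inv_mono_interval {u v : ℝ} (hpu : p ≤ u) (huv : u ≤ v) (hvq : v ≤ q)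
    (hw : ContinuousOn w (Icc p q)) (hw0 : ∀ x ∈ Icc p q, 0 < w x) :
    ∫ x in u..v, (w x)⁻¹ ≤ ∫ x in p..q, (w x)⁻¹ :=
  intervalIntegral.integral_mono_interval hpu huv hvq
    ((ae_restrict_mem measurableSet_Ioc).mono fun x hx ↦
      (inv_pos.2 (hw0 x (Ioc_subset_Icc_self hx))).le)
    (intervalIntegrable_inv_of_pos (hpu.trans (huv.trans hvq)) hw hw0)

lemma sq_sub_le_integral_inv_mul_integral_deriv_sq_mul_of_le {u v : ℝ}
    (hpu : p ≤ u) (huv : u ≤ v) (hvq : v ≤ q)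
    (hw : ContinuousOn w (Icc p q)) (hw0 : ∀ x ∈ Icc p q, 0 < w x)
    (hf : AbsolutelyContinuousOnInterval f p q)
    (hE : IntervalIntegrable (fun x ↦ deriv f x ^ 2 * w x) volume p q) :
    (f v - f u) ^ 2 ≤ (∫ x in u..v, (w x)⁻¹) * ∫ x in p..q, deriv f x ^ 2 * w x := by
  have hsub : Icc u v ⊆ Icc p q := Icc_subset_Icc hpu hvq
  have hsub' : uIcc u v ⊆ uIcc p q := by rwa [uIcc_of_le huv, uIcc_of_le (by linarith)]
  have hinv0 : 0 ≤ ∫ x in u..v, (w x)⁻¹ :=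
    intervalIntegral.integral_nonneg huv fun x hx ↦ (inv_pos.2 (hw0 x (hsub hx))).le
  have henergy : ∫ x in u..v, deriv f x ^ 2 * w x ≤ ∫ x in p..q, deriv f x ^ 2 * w x :=
    intervalIntegral.integral_mono_interval hpu huv hvq
      ((ae_restrict_mem measurableSet_Ioc).mono fun x hx ↦
        mul_nonneg (sq_nonneg _) (hw0 x (Ioc_subset_Icc_self hx)).le) hE
  exact (sq_sub_le_integral_inv_mul_integral_deriv_sq_mul huv (hw.mono hsub)
    (fun x hx ↦ hw0 x (hsub hx)) (hf.mono hsub') (hE.mono_set hsub')).trans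
    (mul_le_mul_of_nonneg_left henergy hinv0)

lemma sq_sub_le_mul_integral_deriv_sq_mul {c V x : ℝ}
    (hw : ContinuousOn w (Icc p q)) (hw0 : ∀ x ∈ Icc p q, 0 < w x)
    (hf : AbsolutelyContinuousOnInterval f p q)
    (hE : IntervalIntegrable (fun x ↦ deriv f x ^ 2 * w x) volume p q) (hc : c ∈ Icc p q)
    (hl : ∫ x in p..c, (w x)⁻¹ ≤ V) (hr : ∫ x in c..q, (w x)⁻¹ ≤ V) (hx : x ∈ Icc p q) :
    (f x - f c) ^ 2 ≤ V * ∫ x in p..q, deriv f x ^ 2 * w x := by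
  have hE0 : 0 ≤ ∫ x in p..q, deriv f x ^ 2 * w x :=
    intervalIntegral.integral_nonneg (hc.1.trans hc.2) fun x hx ↦
      mul_nonneg (sq_nonneg _) (hw0 x hx).le
  rcases le_total c x with hcx | hxc
  · have hsub : Icc c q ⊆ Icc p q := Icc_subset_Icc_left hc.1
    refine (sq_sub_le_integral_inv_mul_integral_deriv_sq_mul_of_le hc.1 hcx hx.2 hw hw0 hf hE).trans
      (mul_le_mul_of_nonneg_right (le_trans ?_ hr) hE0)
    exact integral_inv_mono_interval le_rfl hcx hx.2 (hw.mono hsub) fun y hy ↦ hw0 y (hsub hy)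
  · have hsub : Icc p c ⊆ Icc p q := Icc_subset_Icc_right hc.2
    rw [← neg_sub, neg_sq]
    refine (sq_sub_le_integral_inv_mul_integral_deriv_sq_mul_of_le hx.1 hxc hc.2 hw hw0 hf hE).trans
      (mul_le_mul_of_nonneg_right (le_trans ?_ hl) hE0)
    exact integral_inv_mono_interval hx.1 hxc le_rfl (hw.mono hsub) fun y hy ↦ hw0 y (hsub hy)

lemma integral_sq_mul_le_mul_integral_deriv_sq_mul {c V : ℝ}
    (hw : ContinuousOn w (Icc p q)) (hw0 : ∀ x ∈ Icc p q, 0 < w x)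
    (hf : AbsolutelyContinuousOnInterval f p q)
    (hE : IntervalIntegrable (fun x ↦ deriv f x ^ 2 * w x) volume p q) (hc : c ∈ Icc p q)
    (hl : ∫ x in p..c, (w x)⁻¹ ≤ V) (hr : ∫ x in c..q, (w x)⁻¹ ≤ V)
    (hmean : ∫ x in p..q, f x * w x = 0) :
    ∫ x in p..q, f x ^ 2 * w x ≤
      V * (∫ x in p..q, w x) * ∫ x in p..q, deriv f x ^ 2 * w x := by
  have hpq : p ≤ q := hc.1.trans hc.2
  have hfc : ContinuousOn f (Icc p q) := uIcc_of_le hpq ▸ hf.continuousOn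
  have integrable {g : ℝ → ℝ} (hg : ContinuousOn g (Icc p q)) : IntegrableOn g (Ioc p q) :=
    hg.integrableOn_Icc.mono_set Ioc_subset_Icc_self
  calc ∫ x in p..q, f x ^ 2 * w x
      ≤ ∫ x in p..q, (f x - f c) ^ 2 * w x := by
        simp only [intervalIntegral.integral_of_le hpq] at hmean ⊢
        exact integral_sq_mul_le_integral_sub_sq_mul
          ((ae_restrict_mem measurableSet_Ioc).mono fun x hx ↦ (hw0 x (Ioc_subset_Icc_self hx)).le)
          (integrable hw) (integrable (hfc.mul hw)) (integrable ((hfc.pow 2).mul hw)) hmean _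
    _ ≤ ∫ x in p..q, V * (∫ x in p..q, deriv f x ^ 2 * w x) * w x :=
        intervalIntegral.integral_mono_on hpq
          ((((hfc.sub continuousOn_const).pow 2).mul hw).intervalIntegrable_of_Icc hpq)
          ((continuousOn_const.mul hw).intervalIntegrable_of_Icc hpq) fun x hx ↦
            mul_le_mul_of_nonneg_right
              (sq_sub_le_mul_integral_deriv_sq_mul hw hw0 hf hE hc hl hr hx) (hw0 x hx).le
    _ = V * (∫ x in p..q, w x) * ∫ x in p..q, deriv f x ^ 2 * w x := by
        rw [intervalIntegral.integral_const_mul, mul_right_comm]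

end WeightedPoincare

section EndpointProduct

/-- The product `(∫ w) * (∫ 1 / w)` over `[a, b]` governing the weighted Poincaré inequality,
normalised by the ratio of the endpoint values of `w`: with this factor it decreases as the
logarithmic derivative of `w` increases, see `endpointProduct_le_of_monotoneOn_div`. -/
noncomputable def endpointProduct (w : ℝ → ℝ) (a b : ℝ) : ℝ :=
  w a / w b * ((∫ x in a..b, w x) * ∫ x in a..b, (w x)⁻¹)

variable {u v w : ℝ → ℝ} {a b : ℝ}

lemma endpointProduct_congr (hab : a ≤ b) (h : EqOn v u (Icc a b)) :
    endpointProduct v a b = endpointProduct u a b := by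
  have h' : EqOn v u (uIcc a b) := by rwa [uIcc_of_le hab]
  have hinv : EqOn (fun x ↦ (v x)⁻¹) (fun x ↦ (u x)⁻¹) (uIcc a b) := fun x hx ↦ by simp only [h' hx]
  rw [endpointProduct, endpointProduct, intervalIntegral.integral_congr h',
    intervalIntegral.integral_congr hinv, h (left_mem_Icc.2 hab), h (right_mem_Icc.2 hab)]

lemma endpointProduct_le_of_monotoneOn_div (hab : a ≤ b)
    (hu : ContinuousOn u (Icc a b)) (hu0 : ∀ x ∈ Icc a b, 0 < u x)
    (hv : ContinuousOn v (Icc a b)) (hv0 : ∀ x ∈ Icc a b, 0 < v x)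
    (hvu : MonotoneOn (fun x ↦ v x / u x) (Icc a b)) :
    endpointProduct v a b ≤ endpointProduct u a b := by
  have ha := left_mem_Icc.2 hab
  have hb := right_mem_Icc.2 hab
  have hua := hu0 a ha
  have hub := hu0 b hb
  have hva := hv0 a ha
  have hvb := hv0 b hb
  have hle : ∫ x in a..b, v x ≤ v b / u b * ∫ x in a..b, u x := by
    rw [← intervalIntegral.integral_const_mul]
    refine intervalIntegral.integral_mono_on hab (hv.intervalIntegrable_of_Icc hab)
      ((hu.intervalIntegrable_of_Icc hab).const_mul _) fun x hx ↦ ?_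
    rw [← div_le_iff₀ (hu0 x hx)]
    exact hvu hx hb hx.2
  have hinv_le : ∫ x in a..b, (v x)⁻¹ ≤ u a / v a * ∫ x in a..b, (u x)⁻¹ := by
    rw [← intervalIntegral.integral_const_mul]
    refine intervalIntegral.integral_mono_on hab (intervalIntegrable_inv_of_pos hab hv hv0)
      ((intervalIntegrable_inv_of_pos hab hu hu0).const_mul _) fun x hx ↦ ?_
    rw [← inv_div, ← mul_inv, inv_le_inv₀ (hv0 x hx) (mul_pos (div_pos hva hua) (hu0 x hx)),
      ← le_div_iff₀ (hu0 x hx)]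
    exact hvu ha hx hx.1
  have hinv0 : 0 ≤ ∫ x in a..b, (v x)⁻¹ :=
    intervalIntegral.integral_nonneg hab fun x hx ↦ (inv_pos.2 (hv0 x hx)).le
  have hu_int0 : 0 ≤ ∫ x in a..b, u x :=
    intervalIntegral.integral_nonneg hab fun x hx ↦ (hu0 x hx).le
  calc endpointProduct v a b
      ≤ v a / v b * ((v b / u b * ∫ x in a..b, u x) * (u a / v a * ∫ x in a..b, (u x)⁻¹)) := by
        unfold endpointProduct
        gcongr
    _ = endpointProduct u a b := by
        unfold endpointProduct
        field_simp

lemma endpointProduct_rpow_le_of_monotoneOn_div {n : ℝ} (hn : 0 ≤ n) (hab : a ≤ b)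
    (hu : ContinuousOn u (Icc a b)) (hu0 : ∀ x ∈ Icc a b, 0 < u x)
    (hv : ContinuousOn v (Icc a b)) (hv0 : ∀ x ∈ Icc a b, 0 < v x)
    (hvu : MonotoneOn (fun x ↦ v x / u x) (Icc a b)) :
    endpointProduct (fun x ↦ v x ^ n) a b ≤ endpointProduct (fun x ↦ u x ^ n) a b := by
  refine endpointProduct_le_of_monotoneOn_div hab
    (hu.rpow_const fun x hx ↦ .inl (hu0 x hx).ne') (fun x hx ↦ Real.rpow_pos_of_pos (hu0 x hx) n)
    (hv.rpow_const fun x hx ↦ .inl (hv0 x hx).ne') (fun x hx ↦ Real.rpow_pos_of_pos (hv0 x hx) n)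
    fun x hx y hy hxy ↦ ?_
  simp only [← Real.div_rpow (hv0 _ hx).le (hu0 _ hx).le,
    ← Real.div_rpow (hv0 _ hy).le (hu0 _ hy).le]
  exact Real.rpow_le_rpow (div_pos (hv0 x hx) (hu0 x hx)).le (hvu hx hy hxy) hn

lemma sq_mul_endpointProduct_exp_le_one {c : ℝ} (hc : 0 < c) (hab : a ≤ b) :
    c ^ 2 * endpointProduct (fun x ↦ Real.exp (c * x)) a b ≤ 1 := by
  have hint {k : ℝ} (hk : k ≠ 0) :
      ∫ x in a..b, Real.exp (k * x) = (Real.exp (k * b) - Real.exp (k * a)) / k := by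
    rw [intervalIntegral.integral_comp_mul_left _ hk, integral_exp, smul_eq_mul, div_eq_inv_mul]
  have hratio : Real.exp (c * a) / Real.exp (c * b) ≤ 1 :=
    div_le_one_of_le₀ (Real.exp_le_exp.2 (by gcongr)) (Real.exp_pos _).le
  calc c ^ 2 * endpointProduct (fun x ↦ Real.exp (c * x)) a b
      = (1 - Real.exp (c * a) / Real.exp (c * b)) ^ 2 := by
        simp only [endpointProduct, ← Real.exp_neg, ← neg_mul, hint hc.ne',
          hint (neg_ne_zero.2 hc.ne')]
        rw [neg_mul, neg_mul, Real.exp_neg, Real.exp_neg]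
        field_simp
        ring
    _ ≤ 1 := pow_le_one₀ (sub_nonneg.2 hratio) (sub_le_self _ (by positivity))

-- Dominating `x ^ (-n)` by `b ^ 2 * x ^ (-n - 2)` avoids the logarithm that appears at `n = 1`.
lemma integral_inv_rpow_le {n : ℝ} (hn : -1 < n) (ha : 0 < a) (hab : a ≤ b) :
    ∫ x in a..b, (x ^ n)⁻¹ ≤ b ^ 2 * (a ^ (-(n + 1)) / (n + 1)) := by
  have hb : 0 < b := ha.trans_le hab
  have hn' : 0 < n + 1 := by linarith
  have h0 : (0 : ℝ) ∉ uIcc a b := by simp [uIcc_of_le hab, ha]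
  have hle : ∀ x ∈ Icc a b, (x ^ n)⁻¹ ≤ b ^ 2 * x ^ (-n - 2) := fun x hx ↦ by
    have hx0 : 0 < x := ha.trans_le hx.1
    calc (x ^ n)⁻¹ = x ^ 2 * x ^ (-n - 2) := by
          rw [← Real.rpow_neg hx0.le, ← Real.rpow_natCast, ← Real.rpow_add hx0]
          congr 1
          push_cast
          ring
      _ ≤ b ^ 2 * x ^ (-n - 2) := by
          gcongr
          exact hx.2
  calc ∫ x in a..b, (x ^ n)⁻¹
      ≤ ∫ x in a..b, b ^ 2 * x ^ (-n - 2) :=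
        intervalIntegral.integral_mono_on hab
          (intervalIntegrable_inv_of_pos hab
            (continuousOn_id.rpow_const fun x hx ↦ .inl (ha.trans_le hx.1).ne')
            fun x hx ↦ Real.rpow_pos_of_pos (ha.trans_le hx.1) n)
          ((intervalIntegral.intervalIntegrable_rpow (.inr h0)).const_mul _) hle
    _ = b ^ 2 * ((a ^ (-(n + 1)) - b ^ (-(n + 1))) / (n + 1)) := by
        rw [intervalIntegral.integral_const_mul, integral_rpow (.inr ⟨by linarith, h0⟩),
          show -n - 2 + 1 = -(n + 1) by ring, div_neg, ← neg_div, neg_sub]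
    _ ≤ b ^ 2 * (a ^ (-(n + 1)) / (n + 1)) := by
        gcongr
        exact sub_le_self _ (by positivity)

lemma endpointProduct_rpow_le {n : ℝ} (hn : -1 < n) (ha : 0 < a) (hab : a ≤ b) :
    endpointProduct (fun x ↦ x ^ n) a b ≤ b ^ 3 / (a * (n + 1) ^ 2) := by
  have hb : 0 < b := ha.trans_le hab
  have hn' : 0 < n + 1 := by linarith
  have hpow : ∫ x in a..b, x ^ n ≤ b ^ (n + 1) / (n + 1) := by
    rw [integral_rpow (.inl hn)]
    gcongr
    exact sub_le_self _ (by positivity)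
  have hinv := integral_inv_rpow_le hn ha hab
  calc endpointProduct (fun x ↦ x ^ n) a b
      ≤ a ^ n / b ^ n * (b ^ (n + 1) / (n + 1) * (b ^ 2 * (a ^ (-(n + 1)) / (n + 1)))) := by
        unfold endpointProduct
        gcongr
        exact intervalIntegral.integral_nonneg hab fun x hx ↦
          (inv_pos.2 (Real.rpow_pos_of_pos (ha.trans_le hx.1) n)).le
    _ = b ^ 3 / (a * (n + 1) ^ 2) := by
        rw [Real.rpow_neg ha.le, Real.rpow_add_one ha.ne', Real.rpow_add_one hb.ne']
        field_simp

end EndpointProduct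

section PoincareConstant

variable {f w : ℝ → ℝ} {p q : ℝ} {C : NNReal}

lemma slopeOn_univ_of_differentiableAt {x : ℝ} (hf : DifferentiableAt ℝ f x) :
    slopeOn f univ x = |deriv f x| := by
  have h := (hasDerivAt_iff_tendsto_slope.1 hf.hasDerivAt).abs
  rw [slopeOn, ← compl_eq_univ_sdiff]
  refine Tendsto.limsup_eq (h.congr fun y ↦ ?_)
  rw [slope_def_field, abs_div]

lemma integral_slopeOn_sq_mul_eq_integral_deriv_sq_mul
    (hf : AbsolutelyContinuousOnInterval f p q) (w : ℝ → ℝ) :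
    ∫ x in p..q, slopeOn f univ x ^ 2 * w x = ∫ x in p..q, deriv f x ^ 2 * w x := by
  refine intervalIntegral.integral_congr_ae ?_
  filter_upwards [hf.ae_differentiableAt] with x hx hx'
  rw [slopeOn_univ_of_differentiableAt (hx (uIoc_subset_uIcc hx')), sq_abs]

lemma LocLipschitzOn.exists_lipschitzOnWith_Icc (hf : LocLipschitzOn f univ) (p q : ℝ) :
    ∃ C : NNReal, LipschitzOnWith C f (Icc p q) := by
  refine LocallyLipschitzOn.exists_lipschitzOnWith_of_compact isCompact_Icc fun x _ ↦ ?_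
  obtain ⟨ε, hε, C, hC⟩ := hf x (mem_univ x)
  exact ⟨C, _, mem_nhdsWithin_of_mem_nhds (Metric.ball_mem_nhds x hε), by simpa using hC⟩

lemma intervalIntegrable_deriv_sq_mul_of_lipschitzOnWith (hpq : p ≤ q)
    (hw : ContinuousOn w (Icc p q)) (hf : LipschitzOnWith C f (Icc p q)) :
    IntervalIntegrable (fun x ↦ deriv f x ^ 2 * w x) volume p q := by
  have hderiv : IntervalIntegrable (fun x ↦ deriv f x ^ 2) volume p q := by
    rw [intervalIntegrable_iff_integrableOn_Ioo_of_le hpq]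
    refine Measure.integrableOn_of_bounded (M := (C : ℝ) ^ 2) measure_Ioo_lt_top.ne
      ((measurable_deriv f).pow_const 2).aestronglyMeasurable
      ((ae_restrict_mem measurableSet_Ioo).mono fun x hx ↦ ?_)
    rw [norm_pow]
    exact pow_le_pow_left₀ (norm_nonneg _)
      (norm_deriv_le_of_lipschitzOn (Icc_mem_nhds hx.1 hx.2) hf) 2
  exact hderiv.mul_continuousOn (by rwa [uIcc_of_le hpq])

lemma integral_univ_mul_indicator_Icc (hpq : p ≤ q) (f w : ℝ → ℝ) :
    ∫ x in univ, f x * (Icc p q).indicator w x = ∫ x in p..q, f x * w x := by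
  simp only [← indicator_mul_right]
  rw [setIntegral_univ, integral_indicator measurableSet_Icc, integral_Icc_eq_integral_Ioc,
    intervalIntegral.integral_of_le hpq]

lemma integral_sub_mul_eq_zero {m : ℝ} (hpq : p ≤ q) (hw : ContinuousOn w (Icc p q))
    (hm : m * ∫ x in p..q, w x = ∫ x in p..q, x * w x) :
    ∫ x in p..q, (x - m) * w x = 0 := by
  have hxw : IntervalIntegrable (fun x ↦ x * w x) volume p q :=
    (continuousOn_id.mul hw).intervalIntegrable_of_Icc hpq
  simp only [sub_mul]
  rw [intervalIntegral.integral_sub hxw ((hw.intervalIntegrable_of_Icc hpq).const_mul m),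
    intervalIntegral.integral_const_mul, hm, sub_self]

lemma integral_pos_of_forall_Icc_pos (hpq : p < q) (hw : ContinuousOn w (Icc p q))
    (hw0 : ∀ x ∈ Icc p q, 0 < w x) : 0 < ∫ x in p..q, w x :=
  intervalIntegral.intervalIntegral_pos_of_pos_on (hw.intervalIntegrable_of_Icc hpq.le)
    (fun x hx ↦ hw0 x (Ioo_subset_Icc_self hx)) hpq

lemma integral_mul_integral_inv_pos (hpq : p < q) (hw : ContinuousOn w (Icc p q))
    (hw0 : ∀ x ∈ Icc p q, 0 < w x) : 0 < (∫ x in p..q, w x) * ∫ x in p..q, (w x)⁻¹ :=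
  mul_pos (integral_pos_of_forall_Icc_pos hpq hw hw0) (integral_pos_of_forall_Icc_pos hpq
    (hw.inv₀ fun x hx ↦ (hw0 x hx).ne') fun x hx ↦ inv_pos.2 (hw0 x hx))

lemma integral_sub_sq_mul_pos (m : ℝ) (hpq : p < q) (hw : ContinuousOn w (Icc p q))
    (hw0 : ∀ x ∈ Icc p q, 0 < w x) : 0 < ∫ x in p..q, (x - m) ^ 2 * w x := by
  obtain ⟨y, hy, hym⟩ : ∃ y ∈ Icc p q, y ≠ m := (Icc_infinite hpq).nontrivial.exists_ne m
  exact intervalIntegral.integral_pos hpq (ContinuousOn.mul (by fun_prop) hw)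
    (fun x hx ↦ mul_nonneg (sq_nonneg _) (hw0 x (Ioc_subset_Icc_self hx)).le)
    ⟨y, hy, mul_pos (sq_pos_of_ne_zero (sub_ne_zero.2 hym)) (hw0 y hy)⟩

/- `sInf ∅ = 0` in `ℝ`, so an admissible function has to be exhibited: the identity recentred at
the barycentre of `w`. -/
lemma le_poincareConst_indicator_Icc {Λ : ℝ} (hpq : p < q) (hw : ContinuousOn w (Icc p q))
    (hw0 : ∀ x ∈ Icc p q, 0 < w x)
    (hΛ : ∀ (f : ℝ → ℝ) (C : NNReal), LipschitzOnWith C f (Icc p q) →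
      ∫ x in p..q, f x * w x = 0 →
      Λ * ∫ x in p..q, f x ^ 2 * w x ≤ ∫ x in p..q, deriv f x ^ 2 * w x) :
    Λ ≤ poincareConst ((Icc p q).indicator w) univ := by
  simp only [poincareConst, integral_univ_mul_indicator_Icc hpq.le]
  refine le_csInf ?_ ?_
  · have hmass := integral_pos_of_forall_Icc_pos hpq hw hw0
    set m := (∫ x in p..q, x * w x) / ∫ x in p..q, w x
    refine ⟨_, fun x ↦ x - m, fun x _ ↦ ⟨1, one_pos, 1, ?_⟩,
      integral_sub_mul_eq_zero hpq.le hw (div_mul_cancel₀ _ hmass.ne'),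
      integral_sub_sq_mul_pos m hpq hw hw0, ?_, rfl⟩
    · exact ((LipschitzWith.id.sub (LipschitzWith.const m)).weaken (by simp)).lipschitzOnWith
    · rw [← funext fun x ↦ indicator_mul_right (Icc p q) (fun x ↦ (x - m) ^ 2) w,
        integrableOn_univ, integrable_indicator_iff measurableSet_Icc]
      exact (ContinuousOn.mul (by fun_prop) hw).integrableOn_Icc
  · rintro r ⟨f, hf, hmean, hpos, -, rfl⟩
    obtain ⟨C, hC⟩ := hf.exists_lipschitzOnWith_Icc p q
    have hac : AbsolutelyContinuousOnInterval f p q :=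
      LipschitzOnWith.absolutelyContinuousOnInterval (by rwa [uIcc_of_le hpq.le])
    rw [le_div_iff₀ hpos, integral_slopeOn_sq_mul_eq_integral_deriv_sq_mul hac]
    exact hΛ f C hC hmean

lemma integral_left_half_eq_right_half (hpq : p ≤ q)
    (hsymm : ∀ x ∈ Icc p q, w (p + q - x) = w x) :
    ∫ x in p..(p + q) / 2, w x = ∫ x in (p + q) / 2..q, w x := by
  calc ∫ x in p..(p + q) / 2, w x
      = ∫ x in p + q - q..p + q - (p + q) / 2, w x := by congr 1 <;> ring
    _ = ∫ x in (p + q) / 2..q, w (p + q - x) :=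
        (intervalIntegral.integral_comp_sub_left w (p + q)).symm
    _ = ∫ x in (p + q) / 2..q, w x := intervalIntegral.integral_congr fun x hx ↦ by
        rw [uIcc_of_le (by linarith)] at hx
        exact hsymm x ⟨by linarith [hx.1], hx.2⟩

lemma inv_le_poincareConst_of_symm (hpq : p < q) (hw : ContinuousOn w (Icc p q))
    (hw0 : ∀ x ∈ Icc p q, 0 < w x) (hsymm : ∀ x ∈ Icc p q, w (p + q - x) = w x) :
    (2 * ((∫ x in (p + q) / 2..q, w x) * ∫ x in (p + q) / 2..q, (w x)⁻¹))⁻¹ ≤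
      poincareConst ((Icc p q).indicator w) univ := by
  have hc : (p + q) / 2 ∈ Icc p q := ⟨by linarith, by linarith⟩
  have hprod := integral_mul_integral_inv_pos (by linarith) (hw.mono (Icc_subset_Icc_left hc.1))
    fun x hx ↦ hw0 x (Icc_subset_Icc_left hc.1 hx)
  have hmass : ∫ x in p..q, w x = 2 * ∫ x in (p + q) / 2..q, w x := by
    rw [← intervalIntegral.integral_add_adjacent_intervals
      ((hw.mono (Icc_subset_Icc_right hc.2)).intervalIntegrable_of_Icc hc.1)
      ((hw.mono (Icc_subset_Icc_left hc.1)).intervalIntegrable_of_Icc hc.2),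
      integral_left_half_eq_right_half hpq.le hsymm, two_mul]
  refine le_poincareConst_indicator_Icc hpq hw hw0 fun f C hf hmean ↦ ?_
  have hpoincare := integral_sq_mul_le_mul_integral_deriv_sq_mul hw hw0
    (LipschitzOnWith.absolutelyContinuousOnInterval (by rwa [uIcc_of_le hpq.le]))
    (intervalIntegrable_deriv_sq_mul_of_lipschitzOnWith hpq.le hw hf) hc
    (integral_left_half_eq_right_half hpq.le fun x hx ↦ by rw [hsymm x hx]).le le_rfl hmean
  rw [inv_mul_le_iff₀ (by positivity)]
  refine hpoincare.trans_eq ?_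
  rw [hmass]
  ring

lemma mul_div_le_poincareConst_of_mul_endpointProduct_le_one {M : ℝ} (hpq : p < q)
    (hw : ContinuousOn w (Icc p q)) (hw0 : ∀ x ∈ Icc p q, 0 < w x)
    (hsymm : ∀ x ∈ Icc p q, w (p + q - x) = w x)
    (hM : M * endpointProduct w ((p + q) / 2) q ≤ 1) :
    M / 2 * (w ((p + q) / 2) / w q) ≤ poincareConst ((Icc p q).indicator w) univ := by
  have hsub : Icc ((p + q) / 2) q ⊆ Icc p q := Icc_subset_Icc_left (by linarith)
  have hprod := integral_mul_integral_inv_pos (by linarith) (hw.mono hsub)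
    fun x hx ↦ hw0 x (hsub hx)
  refine le_trans ?_ (inv_le_poincareConst_of_symm hpq hw hw0 hsymm)
  rw [endpointProduct] at hM
  rw [← one_div, le_div_iff₀ (by positivity)]
  linarith

end PoincareConstant

section ModelSpace

lemma convexOn_sinh : ConvexOn ℝ (Ici 0) Real.sinh := by
  refine MonotoneOn.convexOn_of_deriv (convex_Ici 0) Real.continuous_sinh.continuousOn
    Real.differentiable_sinh.differentiableOn ?_
  rw [Real.deriv_sinh]
  exact Real.cosh_strictMonoOn.monotoneOn.mono interior_subset

lemma monotoneOn_sinh_div_self : MonotoneOn (fun x ↦ Real.sinh x / x) (Ioi 0) :=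
  fun x hx y hy hxy ↦ by
    simpa using convexOn_sinh.secant_mono self_mem_Ici (mem_Ici_of_Ioi hx) (mem_Ici_of_Ioi hy)
      (ne_of_gt hx) (ne_of_gt hy) hxy

lemma monotone_sinh_div_exp : Monotone fun x ↦ Real.sinh x / Real.exp x := fun x y hxy ↦ by
  have h (z : ℝ) : Real.sinh z / Real.exp z = (1 - Real.exp (-(2 * z))) / 2 := by
    rw [Real.sinh_eq, two_mul, neg_add, Real.exp_add, Real.exp_neg]
    field_simp
  simp only [h]
  gcongr

variable {κ n D : ℝ}

lemma sKappa_of_neg (hκ : κ < 0) (θ : ℝ) : sKappa κ θ = Real.sinh (√(-κ) * θ) / √(-κ) := by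
  rw [sKappa, if_neg hκ.not_gt, if_pos hκ]

lemma sKappa_pos (hκ : κ < 0) {θ : ℝ} (hθ : 0 < θ) : 0 < sKappa κ θ := by
  have hκ' : 0 < √(-κ) := Real.sqrt_pos.2 (neg_pos.2 hκ)
  rw [sKappa_of_neg hκ]
  exact div_pos (Real.sinh_pos_iff.2 (mul_pos hκ' hθ)) hκ'

lemma continuous_sKappa (hκ : κ < 0) : Continuous (sKappa κ) := by
  rw [funext (sKappa_of_neg hκ)]
  fun_prop

lemma sKappa_div_sKappa (hκ : κ < 0) (x y : ℝ) :
    sKappa κ x / sKappa κ y = Real.sinh (√(-κ) * x) / Real.sinh (√(-κ) * y) := by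
  rw [sKappa_of_neg hκ, sKappa_of_neg hκ,
    div_div_div_cancel_right₀ (Real.sqrt_pos.2 (neg_pos.2 hκ)).ne']

lemma monotoneOn_sKappa_div_self (hκ : κ < 0) : MonotoneOn (fun x ↦ sKappa κ x / x) (Ioi 0) := by
  have hκ' : 0 < √(-κ) := Real.sqrt_pos.2 (neg_pos.2 hκ)
  intro x hx y hy hxy
  simp only [sKappa_of_neg hκ, div_div]
  exact monotoneOn_sinh_div_self (mul_pos hκ' hx) (mul_pos hκ' hy) (by gcongr)

lemma monotone_sKappa_div_exp (hκ : κ < 0) :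
    Monotone fun x ↦ sKappa κ x / Real.exp (√(-κ) * x) := by
  intro x y hxy
  simp only [sKappa_of_neg hκ, div_right_comm _ √(-κ)]
  exact div_le_div_of_nonneg_right
    (monotone_sinh_div_exp (mul_le_mul_of_nonneg_left hxy (Real.sqrt_nonneg _)))
    (Real.sqrt_nonneg _)

lemma neg_mul_sq_mul_endpointProduct_sKappa_le_one (hκ : κ < 0) (hn : 0 < n) {a b : ℝ}
    (ha : 0 < a) (hab : a ≤ b) :
    -κ * n ^ 2 * endpointProduct (fun x ↦ sKappa κ x ^ n) a b ≤ 1 := by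
  have hκ' : 0 < √(-κ) := Real.sqrt_pos.2 (neg_pos.2 hκ)
  calc -κ * n ^ 2 * endpointProduct (fun x ↦ sKappa κ x ^ n) a b
      ≤ -κ * n ^ 2 * endpointProduct (fun x ↦ Real.exp (√(-κ) * x) ^ n) a b := by
        gcongr
        · exact mul_nonneg (neg_nonneg.2 hκ.le) (sq_nonneg n)
        · exact endpointProduct_rpow_le_of_monotoneOn_div hn.le hab (by fun_prop)
            (fun x _ ↦ Real.exp_pos _) (continuous_sKappa hκ).continuousOn
            (fun x hx ↦ sKappa_pos hκ (ha.trans_le hx.1))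
            ((monotone_sKappa_div_exp hκ).monotoneOn _)
    _ = (√(-κ) * n) ^ 2 * endpointProduct (fun x ↦ Real.exp (√(-κ) * n * x)) a b := by
        simp only [← Real.exp_mul, mul_pow, Real.sq_sqrt (neg_nonneg.2 hκ.le), mul_right_comm]
    _ ≤ 1 := sq_mul_endpointProduct_exp_le_one (mul_pos hκ' hn) hab

lemma endpointProduct_sKappa_le (hκ : κ < 0) (hn : 0 ≤ n) {a b : ℝ} (ha : 0 < a) (hab : a ≤ b) :
    endpointProduct (fun x ↦ sKappa κ x ^ n) a b ≤ b ^ 3 / (a * (n + 1) ^ 2) := by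
  have hpos : Icc a b ⊆ Ioi 0 := fun x hx ↦ ha.trans_le hx.1
  exact (endpointProduct_rpow_le_of_monotoneOn_div hn hab continuousOn_id hpos
    (continuous_sKappa hκ).continuousOn (fun x hx ↦ sKappa_pos hκ (hpos hx))
    ((monotoneOn_sKappa_div_self hκ).mono hpos)).trans
    (endpointProduct_rpow_le (by linarith) ha hab)

lemma max_mul_endpointProduct_sKappa_le_two (hκ : κ < 0) (hn : 0 < n) (hD : 0 < D) :
    max (-κ * n ^ 2) ((n + 1) ^ 2 / D ^ 2) *
      endpointProduct (fun x ↦ sKappa κ x ^ n) (D / 2) D ≤ 2 := by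
  have hD2 : 0 < D / 2 := half_pos hD
  rcases max_choice (-κ * n ^ 2) ((n + 1) ^ 2 / D ^ 2) with hmax | hmax <;> rw [hmax]
  · exact (neg_mul_sq_mul_endpointProduct_sKappa_le_one hκ hn hD2 (half_le_self hD.le)).trans
      one_le_two
  · calc (n + 1) ^ 2 / D ^ 2 * endpointProduct (fun x ↦ sKappa κ x ^ n) (D / 2) D
        ≤ (n + 1) ^ 2 / D ^ 2 * (D ^ 3 / (D / 2 * (n + 1) ^ 2)) := by
          gcongr
          exact endpointProduct_sKappa_le hκ hn.le hD2 (half_le_self hD.le)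
      _ = 2 := by field_simp

lemma quarter_mul_max_mul_le_poincareConst_indicator_sKappa (hκ : κ < 0) (hn : 0 < n)
    (hD : 0 < D) :
    1 / 4 * max (-κ * n ^ 2) ((n + 1) ^ 2 / D ^ 2) * (sKappa κ (D / 2) / sKappa κ D) ^ n ≤
      poincareConst ((Icc 0 D).indicator fun x ↦ sKappa κ (max x (D - x)) ^ n) univ := by
  have hmax_of_half_le {x : ℝ} (hx : D / 2 ≤ x) : max x (D - x) = x := max_eq_left (by linarith)
  have hpos (x : ℝ) : 0 < sKappa κ (max x (D - x)) := sKappa_pos hκ <| by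
    linarith [le_max_left x (D - x), le_max_right x (D - x)]
  have hcont : Continuous fun x ↦ sKappa κ (max x (D - x)) ^ n :=
    ((continuous_sKappa hκ).comp (by fun_prop)).rpow_const fun x ↦ .inl (hpos x).ne'
  have hprod : max (-κ * n ^ 2) ((n + 1) ^ 2 / D ^ 2) / 2 *
      endpointProduct (fun x ↦ sKappa κ (max x (D - x)) ^ n) ((0 + D) / 2) D ≤ 1 := by
    rw [zero_add, endpointProduct_congr (u := fun x ↦ sKappa κ x ^ n) (half_le_self hD.le)
      fun x hx ↦ by simp only [hmax_of_half_le hx.1]]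
    linarith [max_mul_endpointProduct_sKappa_le_two hκ hn hD]
  have hbound := mul_div_le_poincareConst_of_mul_endpointProduct_le_one hD hcont.continuousOn
    (fun x _ ↦ Real.rpow_pos_of_pos (hpos x) n)
    (fun x _ ↦ by rw [zero_add, sub_sub_cancel, max_comm]) hprod
  rw [zero_add, hmax_of_half_le le_rfl, hmax_of_half_le (half_le_self hD.le),
    ← Real.div_rpow (sKappa_pos hκ (half_pos hD)).le (sKappa_pos hκ hD).le] at hbound
  linarith

lemma modelDensity_eq_indicator (K N D : ℝ) :
    modelDensity K N D =
      (Icc 0 D).indicator fun x ↦ sKappa (K / (N - 1)) (max x (D - x)) ^ (N - 1) := by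
  funext x
  simp only [modelDensity, indicator, mem_Icc]
  rcases le_or_gt x (D / 2) with hx | hx
  · rw [max_eq_right (by linarith)]
    grind
  · rw [max_eq_left (by linarith)]
    grind

end ModelSpace

/-- Lower bound for `λ[h_{K,N,D}]` when `K < 0` (Lemma 5.3). -/
theorem stmt_13 (K N D : ℝ) (hK : K < 0) (hN : 1 < N) (hD : 0 < D) :
    (1 / 4) * max (|K| * (N - 1)) (N ^ 2 / D ^ 2) *
        (Real.sinh (Real.sqrt (-K / (N - 1)) * (D / 2)) /
          Real.sinh (Real.sqrt (-K / (N - 1)) * D)) ^ (N - 1)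
      ≤ poincareConst (modelDensity K N D) Set.univ := by
  have hN' : 0 < N - 1 := sub_pos.2 hN
  have hκ : K / (N - 1) < 0 := div_neg_of_neg_of_pos hK hN'
  have hcurv : |K| * (N - 1) = -(K / (N - 1)) * (N - 1) ^ 2 := by
    rw [abs_of_neg hK]
    field_simp
  rw [modelDensity_eq_indicator, hcurv, neg_div, ← sKappa_div_sKappa hκ]
  simpa only [sub_add_cancel] using
    quarter_mul_max_mul_le_poincareConst_indicator_sKappa hκ hN' hD
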